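/- Let p be a prime and fix a ∈ ℚ_p. The set A of all functions f : ℚ_p → ℚ_p such that (1) f is continuous on ℚ_p, (2) f is differentiable at every point x ≠ a, (3) f is not differentiable at a, (4) the derivative of f is unbounded on ℚ_p \ (a + ℤ_p) = {x : ‖x - a‖ > 1} (for every C > 0 there exists x with ‖x - a‖ > 1 and ‖deriv f x‖ > C), and (5) the derivative of f is unbounded on (a + ℤ_p) \ {a} = {x : 0 < ‖x - a‖ ≤ 1} (for every C > 0 there exists x with 0 < ‖x - a‖ ≤ 1 and ‖deriv f x‖ > C), is strongly 𝔠-algebrable in the commutative ℚ_p-algebra of all functions ℚ_p → ℚ_p under pointwise operations: there exists a set B of functions ℚ_p → ℚ_p with cardinality 𝔠 (the continuum) such that for every n ≥ 1, every injective map e : Fin n → B, and every polynomial P ∈ MvPolynomial (Fin n) ℚ_p with P ≠ 0 and constant coefficient 0, the pointwise evaluation of P at e(0), …, e(n−1) belongs to A. -/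

import Mathlib

open Filter Topology

namespace PadicAlg

/-- The growth estimate. -/
theorem growth (p : ℕ) [Fact p.Prime] (Q : Polynomial ℚ_[p]) (hQ : Q ≠ 0) (C : ℝ) :
    ∃ k0 : ℕ, ∀ k, k0 ≤ k → C < ‖Q.eval ((p : ℚ_[p]) ^ (Nat.sqrt k))‖ *
      ‖(p : ℚ_[p]) ^ (Nat.sqrt k) * ((p : ℚ_[p]) ^ k)⁻¹‖ := by
  obtain ⟨R, hR, hnd⟩ := Polynomial.exists_eq_pow_rootMultiplicity_mul_and_not_dvd Q hQ 0
  set d := Q.rootMultiplicity 0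
  have hR0 : R.eval 0 ≠ 0 := by
    intro h
    exact hnd (Polynomial.dvd_iff_isRoot.2 h)
  have hp1 : (1 : ℝ) < p := by exact_mod_cast (Fact.out : p.Prime).one_lt
  have hsq : Tendsto Nat.sqrt atTop atTop := by
    refine tendsto_atTop.2 fun b => ?_
    filter_upwards [eventually_ge_atTop (b * b)] with k hk
    exact Nat.le_sqrt.2 hk
  have hpow : Tendsto (fun k : ℕ => (p : ℚ_[p]) ^ (Nat.sqrt k)) atTop (𝓝 0) := by
    have : Tendsto (fun k : ℕ => (p : ℚ_[p]) ^ k) atTop (𝓝 0) :=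
      tendsto_pow_atTop_nhds_zero_of_norm_lt_one Padic.norm_p_lt_one
    exact this.comp hsq
  have hr : 0 < ‖R.eval 0‖ := norm_pos_iff.2 hR0
  have h1 : Tendsto (fun k : ℕ => ‖R.eval ((p : ℚ_[p]) ^ (Nat.sqrt k))‖) atTop
      (𝓝 ‖R.eval 0‖) := ((R.continuous.tendsto 0).comp hpow).norm
  have h2 : ∀ᶠ k : ℕ in atTop, ‖R.eval 0‖ / 2 < ‖R.eval ((p : ℚ_[p]) ^ (Nat.sqrt k))‖ :=
    h1.eventually_const_lt (by linarith)
  have h3 : Tendsto (fun k : ℕ => ‖R.eval 0‖ / 2 * (p : ℝ) ^ (Nat.sqrt k)) atTop atTop :=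
    ((tendsto_pow_atTop_atTop_of_one_lt hp1).comp hsq).const_mul_atTop (by linarith)
  have h4 := h3.eventually_gt_atTop C
  have h5 := hsq.eventually_ge_atTop (d + 2)
  obtain ⟨k0, hk0⟩ := eventually_atTop.1 (h2.and (h4.and h5))
  refine ⟨k0, fun k hk => ?_⟩
  obtain ⟨a1, a2, a3⟩ := hk0 k hk
  refine a2.trans_le ?_
  have hm : Nat.sqrt k * Nat.sqrt k ≤ k := Nat.sqrt_le k
  set m := Nat.sqrt k
  have e1 : Q.eval ((p : ℚ_[p]) ^ m) = ((p : ℚ_[p]) ^ m) ^ d * R.eval ((p : ℚ_[p]) ^ m) := by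
    conv_lhs => rw [hR]
    simp
  rw [e1]
  simp only [norm_mul, norm_pow, norm_inv, Padic.norm_p]
  have hpp : (0 : ℝ) < p := by linarith
  have key : (p : ℝ) ^ m ≤ (((p : ℝ)⁻¹) ^ m) ^ d * (((p : ℝ)⁻¹) ^ m * (((p : ℝ)⁻¹) ^ k)⁻¹) := by
    have : (p : ℝ) ^ m * ((p : ℝ) ^ m) ^ d * (p : ℝ) ^ m ≤ (p : ℝ) ^ k := by
      rw [← pow_mul, ← pow_add, ← pow_add]
      refine pow_le_pow_right₀ hp1.le ?_
      nlinarith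
    simp only [inv_pow, inv_inv]
    rw [← mul_assoc, ← mul_inv, ← div_eq_inv_mul, le_div_iff₀ (by positivity)]
    linarith
  calc ‖R.eval 0‖ / 2 * (p : ℝ) ^ m
      ≤ ‖R.eval ((p : ℚ_[p]) ^ m)‖ *
        ((((p : ℝ)⁻¹) ^ m) ^ d * (((p : ℝ)⁻¹) ^ m * (((p : ℝ)⁻¹) ^ k)⁻¹)) := by
        gcongr
    _ = _ := by ring

/-- An independent sequence of maps on the Cantor space. -/
theorem exists_indep : ∃ c : ℕ → (ℕ → Bool) → ℕ, ∀ n : ℕ, ∀ b : Fin n → (ℕ → Bool),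
    Function.Injective b → ∀ w : Fin n → ℕ, ∀ r : ℕ, ∃ j, r ≤ j ∧ ∀ i, c j (b i) = w i := by
  obtain ⟨φ, hφ⟩ := exists_surjective_nat (Σ N : ℕ, ((Fin N → Bool) → ℕ))
  refine ⟨fun j b => (φ j.unpair.1).2 (fun i => b i), fun n b hb w r => ?_⟩
  have hN : ∃ N : ℕ, Function.Injective (fun (i : Fin n) (l : Fin N) => b i l) := by
    have : ∀ q : Fin n × Fin n, ∃ l : ℕ, q.1 ≠ q.2 → b q.1 l ≠ b q.2 l := by
      intro q
      by_cases h : q.1 = q.2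
      · exact ⟨0, fun h' => absurd h h'⟩
      · obtain ⟨l, hl⟩ := Function.ne_iff.1 (hb.ne h)
        exact ⟨l, fun _ => hl⟩
    choose l hl using this
    refine ⟨(Finset.univ.sup l) + 1, fun i i' h => ?_⟩
    by_contra hne
    exact hl (i, i') hne
      (congrFun h ⟨l (i, i'), Nat.lt_succ_of_le (Finset.le_sup (Finset.mem_univ (i, i')))⟩)
  obtain ⟨N, hN⟩ := hN
  obtain ⟨s, hs⟩ := hφ ⟨N, Function.extend (fun (i : Fin n) (l : Fin N) => b i l) w 0⟩
  refine ⟨Nat.pair s r, Nat.right_le_pair s r, fun i => ?_⟩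
  have hs' : φ (Nat.unpair (Nat.pair s r)).1 =
      ⟨N, Function.extend (fun (i : Fin n) (l : Fin N) => b i l) w 0⟩ := by
    rw [Nat.unpair_pair]; exact hs
  change ((φ (Nat.unpair (Nat.pair s r)).1).2 fun l => b i l) = w i
  rw [hs']
  exact hN.extend_apply w 0 i

/-- The affine model on the sphere of valuation `K`. -/
noncomputable def G (p : ℕ) [Fact p.Prime] (K : ℤ) (y : ℚ_[p]) : ℚ_[p] :=
  (p : ℚ_[p]) ^ (Nat.sqrt K.natAbs) * (1 + ((p : ℚ_[p]) ^ K.natAbs)⁻¹ * (y - (p : ℚ_[p]) ^ K))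

open Classical in
/-- The generators. -/
noncomputable def F (p : ℕ) [Fact p.Prime] (a : ℚ_[p]) (c : ℕ → (ℕ → Bool) → ℕ)
    (b : ℕ → Bool) (x : ℚ_[p]) : ℚ_[p] :=
  if x = a then 0 else (c (x - a).valuation.natAbs b : ℚ_[p]) * G p (x - a).valuation (x - a)

section
variable (p : ℕ) [hp : Fact p.Prime] (a : ℚ_[p]) (c : ℕ → (ℕ → Bool) → ℕ)

theorem G_hasDerivAt (K : ℤ) (x : ℚ_[p]) : HasDerivAt (fun x => G p K (x - a))
    ((p : ℚ_[p]) ^ (Nat.sqrt K.natAbs) * ((p : ℚ_[p]) ^ K.natAbs)⁻¹) x := by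
  unfold G
  have h : HasDerivAt (fun x : ℚ_[p] => x - a - (p : ℚ_[p]) ^ K) 1 x :=
    ((hasDerivAt_id x).sub_const a).sub_const _
  simpa using (((h.const_mul (((p : ℚ_[p]) ^ K.natAbs)⁻¹)).const_add 1).const_mul
    ((p : ℚ_[p]) ^ (Nat.sqrt K.natAbs)))

theorem G_self (K : ℤ) : G p K ((p : ℚ_[p]) ^ K) = (p : ℚ_[p]) ^ (Nat.sqrt K.natAbs) := by
  simp [G]

theorem val_eventually (x0 : ℚ_[p]) (hx : x0 ≠ a) :
    ∀ᶠ x in 𝓝 x0, x ≠ a ∧ (x - a).valuation = (x0 - a).valuation := by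
  have h0 : x0 - a ≠ 0 := sub_ne_zero.2 hx
  have : ∀ᶠ x in 𝓝 x0, ‖x - x0‖ < ‖x0 - a‖ := by
    have : Metric.ball x0 ‖x0 - a‖ ∈ 𝓝 x0 := Metric.ball_mem_nhds _ (norm_pos_iff.2 h0)
    filter_upwards [this] with x hx
    simpa [dist_eq_norm] using hx
  filter_upwards [this] with x hx
  have hn : ‖x - a‖ = ‖x0 - a‖ := by
    have e : x - a = (x - x0) + (x0 - a) := by ring
    rw [e, Padic.add_eq_max_of_ne hx.ne, max_eq_right hx.le]
  have h1 : x - a ≠ 0 := by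
    rw [← norm_pos_iff, hn]; exact norm_pos_iff.2 h0
  refine ⟨sub_ne_zero.1 h1, ?_⟩
  rw [Padic.norm_eq_zpow_neg_valuation h1, Padic.norm_eq_zpow_neg_valuation h0] at hn
  have hp1 : (1 : ℝ) < p := by exact_mod_cast hp.out.one_lt
  have := zpow_right_injective₀ (by linarith) hp1.ne' hn
  omega

theorem F_eventually (x0 : ℚ_[p]) (hx : x0 ≠ a) :
    ∀ᶠ x in 𝓝 x0, ∀ b, F p a c b x = (c (x0 - a).valuation.natAbs b : ℚ_[p]) *
      G p (x0 - a).valuation (x - a) := by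
  filter_upwards [val_eventually p a x0 hx] with x hx b
  simp [F, hx.1, hx.2]

theorem F_diff (b : ℕ → Bool) (x0 : ℚ_[p]) (hx : x0 ≠ a) :
    DifferentiableAt ℚ_[p] (F p a c b) x0 := by
  have h : DifferentiableAt ℚ_[p] (fun x => (c (x0 - a).valuation.natAbs b : ℚ_[p]) *
      G p (x0 - a).valuation (x - a)) x0 :=
    ((G_hasDerivAt p a _ x0).const_mul _).differentiableAt
  refine h.congr_of_eventuallyEq ?_
  filter_upwards [F_eventually p a c x0 hx] with x hx using hx b

theorem F_cont (b : ℕ → Bool) : Continuous (F p a c b) := by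
  rw [continuous_iff_continuousAt]
  intro x0
  by_cases hx : x0 = a
  swap
  · exact (F_diff p a c b x0 hx).continuousAt
  subst hx
  have hp1 : (1 : ℝ) < p := by exact_mod_cast hp.out.one_lt
  have hF0 : F p x0 c b x0 = 0 := by simp [F]
  rw [ContinuousAt, hF0, Metric.tendsto_nhds]
  intro ε hε
  obtain ⟨M, hM⟩ := exists_pow_lt_of_lt_one hε (inv_lt_one_of_one_lt₀ hp1)
  have hball : Metric.ball x0 ((p : ℝ) ^ (-((M * M : ℕ) : ℤ))) ∈ 𝓝 x0 :=
    Metric.ball_mem_nhds _ (by positivity)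
  filter_upwards [hball] with x hx
  by_cases hxa : x = x0
  · simpa [F, hxa] using hε
  have h0 : x - x0 ≠ 0 := sub_ne_zero.2 hxa
  rw [Metric.mem_ball, dist_eq_norm, Padic.norm_eq_zpow_neg_valuation h0,
    zpow_lt_zpow_iff_right₀ hp1] at hx
  obtain ⟨k, hk⟩ : ∃ k : ℕ, (x - x0).valuation = k := ⟨(x - x0).valuation.toNat, by omega⟩
  have hMk : M * M ≤ k := by omega
  have hpne : (p : ℚ_[p]) ≠ 0 := by exact_mod_cast hp.out.ne_zero
  have hG : G p k (x - x0) = (p : ℚ_[p]) ^ (Nat.sqrt k) * (((p : ℚ_[p]) ^ k)⁻¹ * (x - x0)) := by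
    simp only [G, Int.natAbs_natCast, zpow_natCast]
    field_simp
    ring
  have hnG : ‖G p k (x - x0)‖ = ((p : ℝ)⁻¹) ^ (Nat.sqrt k) := by
    rw [hG, norm_mul, norm_mul, norm_inv, norm_pow, norm_pow, Padic.norm_p,
      Padic.norm_eq_zpow_neg_valuation h0, hk]
    have : (p : ℝ) ≠ 0 := by positivity
    simp [this]
  rw [dist_zero_right]
  simp only [F, hxa, if_false, hk, Int.natAbs_natCast]
  rw [norm_mul, hnG]
  have hc : ‖(c k b : ℚ_[p])‖ ≤ 1 := by exact_mod_cast Padic.norm_int_le_one (c k b : ℤ)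
  calc ‖(c k b : ℚ_[p])‖ * ((p : ℝ)⁻¹) ^ (Nat.sqrt k) ≤ 1 * ((p : ℝ)⁻¹) ^ M := by
        refine mul_le_mul hc ?_ (by positivity) zero_le_one
        refine pow_le_pow_of_le_one (by positivity) (inv_lt_one_of_one_lt₀ hp1).le ?_
        exact Nat.le_sqrt.2 hMk
    _ < ε := by simpa using hM

theorem F_at (b : ℕ → Bool) (K : ℤ) : F p a c b (a + (p : ℚ_[p]) ^ K) =
    (c K.natAbs b : ℚ_[p]) * (p : ℚ_[p]) ^ (Nat.sqrt K.natAbs) := by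
  have hpne : (p : ℚ_[p]) ≠ 0 := by exact_mod_cast hp.out.ne_zero
  have := zpow_ne_zero K hpne
  simp [F, this, G_self]

end

theorem main (p : ℕ) [hp : Fact p.Prime] (a : ℚ_[p]) (c : ℕ → (ℕ → Bool) → ℕ)
    (hc : ∀ n : ℕ, ∀ b : Fin n → (ℕ → Bool),
      Function.Injective b → ∀ w : Fin n → ℕ, ∀ r : ℕ, ∃ j, r ≤ j ∧ ∀ i, c j (b i) = w i)
    (n : ℕ) (b : Fin n → (ℕ → Bool)) (hb : Function.Injective b)
    (P : MvPolynomial (Fin n) ℚ_[p]) (hP : P ≠ 0) (hP0 : MvPolynomial.coeff 0 P = 0) 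
    (φ : ℚ_[p] → ℚ_[p]) (hφ : φ = fun y => MvPolynomial.eval (fun i => F p a c (b i) y) P) :
    Continuous φ ∧ (∀ x : ℚ_[p], x ≠ a → DifferentiableAt ℚ_[p] φ x) ∧
      ¬ DifferentiableAt ℚ_[p] φ a ∧
      (∀ C : ℝ, 0 < C → ∃ x : ℚ_[p], 1 < ‖x - a‖ ∧ C < ‖deriv φ x‖) ∧
      (∀ C : ℝ, 0 < C → ∃ x : ℚ_[p], 0 < ‖x - a‖ ∧ ‖x - a‖ ≤ 1 ∧ C < ‖deriv φ x‖) := by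
  have hpne : (p : ℚ_[p]) ≠ 0 := by exact_mod_cast hp.out.ne_zero
  have hp1 : (1 : ℝ) < p := by exact_mod_cast hp.out.one_lt
  -- choose a direction
  obtain ⟨w, hw⟩ : ∃ w : Fin n → ℕ, MvPolynomial.eval (fun i => (w i : ℚ_[p])) P ≠ 0 := by
    by_contra! h
    apply hP
    refine MvPolynomial.funext_set (fun _ => Set.range (Nat.cast : ℕ → ℚ_[p]))
      (fun _ => Set.infinite_range_of_injective Nat.cast_injective) ?_
    intro x hx
    choose w hw using fun i => hx i (Set.mem_univ i)
    have : x = fun i => (w i : ℚ_[p]) := funext fun i => (hw i).symm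
    rw [this, h]; simp
  set Q : Polynomial ℚ_[p] :=
    MvPolynomial.aeval (fun i => Polynomial.C (w i : ℚ_[p]) * Polynomial.X) P with hQdef
  have hQe : ∀ t, Q.eval t = MvPolynomial.eval (fun i => (w i : ℚ_[p]) * t) P := by
    intro t
    have := MvPolynomial.eval₂_comp_left (Polynomial.evalRingHom t) Polynomial.C
      (fun i => Polynomial.C (w i : ℚ_[p]) * Polynomial.X) P
    rw [hQdef, MvPolynomial.aeval_def, MvPolynomial.eval, MvPolynomial.coe_eval₂Hom]
    rw [← Polynomial.coe_evalRingHom]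
    refine this.trans ?_
    congr 1
    · ext; simp
    · ext; simp
  have hQ1 : Q.eval 1 ≠ 0 := by rw [hQe]; simpa using hw
  have hQ0 : Q.eval 0 = 0 := by
    rw [hQe]
    simp only [mul_zero]
    change MvPolynomial.eval 0 P = 0
    rw [MvPolynomial.eval_zero, MvPolynomial.constantCoeff_eq, hP0]
  have hQ : Q ≠ 0 := by rintro h; simp [h] at hQ1
  have hQ' : Polynomial.derivative Q ≠ 0 := by
    intro h
    have := Polynomial.eq_C_of_derivative_eq_zero h
    rw [this] at hQ0 hQ1
    simp only [Polynomial.eval_C] at hQ0 hQ1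
    exact hQ1 hQ0
  have hder : ∀ K : ℤ, (∀ i, c K.natAbs (b i) = w i) →
      ‖deriv φ (a + (p : ℚ_[p]) ^ K)‖ =
        ‖(Polynomial.derivative Q).eval ((p : ℚ_[p]) ^ (Nat.sqrt K.natAbs))‖ *
        ‖(p : ℚ_[p]) ^ (Nat.sqrt K.natAbs) * ((p : ℚ_[p]) ^ K.natAbs)⁻¹‖ := by
    intro K hK
    have hne : a + (p : ℚ_[p]) ^ K ≠ a := by simpa using zpow_ne_zero K hpne
    have h1 : φ =ᶠ[𝓝 (a + (p : ℚ_[p]) ^ K)] fun x => Q.eval (G p K (x - a)) := by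
      filter_upwards [F_eventually p a c _ hne] with x hx
      have hv : (a + (p : ℚ_[p]) ^ K - a).valuation = K := by simp
      rw [hv] at hx
      rw [hQe, hφ]
      simp only [hx, hK]
    have h2 : HasDerivAt (fun x => Q.eval (G p K (x - a)))
        ((Polynomial.derivative Q).eval ((p : ℚ_[p]) ^ (Nat.sqrt K.natAbs)) *
          ((p : ℚ_[p]) ^ (Nat.sqrt K.natAbs) * ((p : ℚ_[p]) ^ K.natAbs)⁻¹))
        (a + (p : ℚ_[p]) ^ K) := by
      have h3 := Q.hasDerivAt (G p K (a + (p : ℚ_[p]) ^ K - a))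
      have h4 := HasDerivAt.comp (h := fun x => G p K (x - a)) (a + (p : ℚ_[p]) ^ K) h3
        (G_hasDerivAt p a K (a + (p : ℚ_[p]) ^ K))
      rw [add_sub_cancel_left, G_self] at h4
      exact h4
    rw [h1.deriv_eq, h2.deriv, norm_mul]
  refine ⟨?_, ?_, ?_, ?_, ?_⟩
  · rw [hφ]
    exact (MvPolynomial.continuous_eval P).comp (continuous_pi fun i => F_cont p a c (b i))
  · intro x hx
    rw [hφ]
    simp only [MvPolynomial.eval_eq]
    have := fun i => F_diff p a c (b i) x hx
    fun_prop
  · intro hd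
    obtain ⟨C, hC⟩ := hd.hasDerivAt.isBigO_sub.bound
    have hφa : φ a = 0 := by
      rw [hφ]
      simp only [F, if_true]
      change MvPolynomial.eval 0 P = 0
      rw [MvPolynomial.eval_zero, MvPolynomial.constantCoeff_eq, hP0]
    have hx : Tendsto (fun j : ℕ => a + (p : ℚ_[p]) ^ j) atTop (𝓝 a) := by
      have : Tendsto (fun k : ℕ => (p : ℚ_[p]) ^ k) atTop (𝓝 0) :=
        tendsto_pow_atTop_nhds_zero_of_norm_lt_one Padic.norm_p_lt_one
      simpa using this.const_add a
    obtain ⟨j0, hj0⟩ := eventually_atTop.1 (hx.eventually hC)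
    obtain ⟨k0, hk0⟩ := growth p Q hQ C
    obtain ⟨j, hj, hcj⟩ := hc n b hb w (max j0 k0)
    have e1 := hj0 j (le_trans (le_max_left _ _) hj)
    have e2 := hk0 j (le_trans (le_max_right _ _) hj)
    have e3 : φ (a + (p : ℚ_[p]) ^ j) = Q.eval ((p : ℚ_[p]) ^ (Nat.sqrt j)) := by
      rw [hφ, hQe]
      have := fun i => F_at p a c (b i) j
      simp only [zpow_natCast, Int.natAbs_natCast] at this
      simp only [this, hcj]
    rw [hφa, sub_zero, e3, add_sub_cancel_left] at e1
    rw [norm_mul, norm_inv] at e2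
    have hpos : 0 < ‖(p : ℚ_[p]) ^ j‖ := norm_pos_iff.2 (pow_ne_zero _ hpne)
    have hle : ‖(p : ℚ_[p]) ^ (Nat.sqrt j)‖ ≤ 1 := by
      rw [norm_pow]
      exact pow_le_one₀ (norm_nonneg _) Padic.norm_p_lt_one.le
    have e4 : ‖Q.eval ((p : ℚ_[p]) ^ (Nat.sqrt j))‖ * (‖(p : ℚ_[p]) ^ (Nat.sqrt j)‖ *
        ‖(p : ℚ_[p]) ^ j‖⁻¹) ≤ (C * ‖(p : ℚ_[p]) ^ j‖) * (1 * ‖(p : ℚ_[p]) ^ j‖⁻¹) := by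
      gcongr
      exact (norm_nonneg _).trans e1
    have e5 : (C * ‖(p : ℚ_[p]) ^ j‖) * (1 * ‖(p : ℚ_[p]) ^ j‖⁻¹) = C := by
      field_simp
    linarith
  · intro C _
    obtain ⟨k0, hk0⟩ := growth p _ hQ' C
    obtain ⟨j, hj, hcj⟩ := hc n b hb w (max 1 k0)
    refine ⟨a + (p : ℚ_[p]) ^ (-(j : ℤ)), ?_, ?_⟩
    · rw [add_sub_cancel_left, Padic.norm_p_zpow, neg_neg]
      exact one_lt_zpow₀ hp1 (by have := le_trans (le_max_left _ _) hj; omega)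
    · rw [hder _ (by simpa using hcj)]
      simpa using hk0 j (le_trans (le_max_right _ _) hj)
  · intro C _
    obtain ⟨k0, hk0⟩ := growth p _ hQ' C
    obtain ⟨j, hj, hcj⟩ := hc n b hb w k0
    refine ⟨a + (p : ℚ_[p]) ^ (j : ℤ), ?_, ?_, ?_⟩
    · rw [add_sub_cancel_left]
      exact norm_pos_iff.2 (zpow_ne_zero _ hpne)
    · rw [add_sub_cancel_left, Padic.norm_p_zpow]
      exact zpow_le_one_of_nonpos₀ hp1.le (by omega)
    · rw [hder _ (by simpa using hcj)]
      simpa using hk0 j hj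

end PadicAlg


/-- For fixed `a ∈ ℚ_[p]`, the set of continuous functions `ℚ_[p] → ℚ_[p]`
that are differentiable except at `a`, with derivative unbounded both on
`{x : ‖x - a‖ > 1}` and on `{x : 0 < ‖x - a‖ ≤ 1}`, is strongly `𝔠`-algebrable. -/
theorem stmt_4 (p : ℕ) [Fact p.Prime] (a : ℚ_[p]) :
    ∃ B : Set (ℚ_[p] → ℚ_[p]), Cardinal.mk B = Cardinal.continuum ∧
      ∀ n : ℕ, 1 ≤ n → ∀ e : Fin n → (ℚ_[p] → ℚ_[p]), Function.Injective e →
        (∀ i, e i ∈ B) →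
        ∀ P : MvPolynomial (Fin n) ℚ_[p], P ≠ 0 → MvPolynomial.coeff 0 P = 0 →
          Continuous (fun y => MvPolynomial.eval (fun i => e i y) P) ∧
          (∀ x : ℚ_[p], x ≠ a →
            DifferentiableAt ℚ_[p] (fun y => MvPolynomial.eval (fun i => e i y) P) x) ∧
          ¬ DifferentiableAt ℚ_[p] (fun y => MvPolynomial.eval (fun i => e i y) P) a ∧
          (∀ C : ℝ, 0 < C → ∃ x : ℚ_[p], 1 < ‖x - a‖ ∧
            C < ‖deriv (fun y => MvPolynomial.eval (fun i => e i y) P) x‖) ∧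
          (∀ C : ℝ, 0 < C → ∃ x : ℚ_[p], 0 < ‖x - a‖ ∧ ‖x - a‖ ≤ 1 ∧
            C < ‖deriv (fun y => MvPolynomial.eval (fun i => e i y) P) x‖) := by
  obtain ⟨c, hc⟩ := PadicAlg.exists_indep
  have hpne : (p : ℚ_[p]) ≠ 0 := by exact_mod_cast (Fact.out : p.Prime).ne_zero
  have hinj : Function.Injective (PadicAlg.F p a c) := by
    intro b b' h
    by_contra hne
    obtain ⟨j, -, hj⟩ := hc 2 ![b, b'] (by
      intro i i' hi
      fin_cases i <;> fin_cases i' <;> simp_all [eq_comm]) ![0, 1] 0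
    have h0 := hj 0
    have h1 := hj 1
    simp at h0 h1
    have := congrFun h (a + (p : ℚ_[p]) ^ (j : ℤ))
    rw [PadicAlg.F_at, PadicAlg.F_at] at this
    simp only [Int.natAbs_natCast, h0, h1] at this
    simp only [Nat.cast_zero, zero_mul, Nat.cast_one, one_mul] at this
    exact pow_ne_zero _ hpne this.symm
  refine ⟨Set.range (PadicAlg.F p a c), ?_, ?_⟩
  · rw [Cardinal.mk_range_eq _ hinj]
    simp
  · intro n _ e he heB P hP hP0
    choose b hb using heB
    obtain rfl : e = fun i => PadicAlg.F p a c (b i) := funext fun i => (hb i).symm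
    have hbi : Function.Injective b := fun i i' h => he (by simp only [h])
    exact PadicAlg.main p a c hc n b hbi P hP hP0 _ rfl
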